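/- arXiv:2111.11792 — 2 statements merged into one kernel-verified Lean document; each statement's English description precedes it below -/
import Mathlib

section
/- Let d be a real number which is not an integer ≤ 1, and let u be a real number with |u| < 1. Then the series ∑_{n≥0} D_n(d)·uⁿ converges absolutely and ∑_{n≥0} D_n(d)·uⁿ = (1 + u)·(1 − u)^{−d}. -/
open Real

/-- The analytically continued degeneracy of spherical harmonics on `S^d`. -/
noncomputable def sphereDegeneracy (d : ℝ) (n : ℕ) : ℝ :=
  Real.Gamma ((n : ℝ) + d - 1) * (2 * (n : ℝ) + d - 1) /
    (Real.Gamma ((n : ℝ) + 1) * Real.Gamma d)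

/-!
Write `cₙ = Γ(n + d) / (n! Γ(d))` for the coefficients of the binomial series of `(1 - u) ^ (-d)`.
Since `(n + 1) cₙ₊₁ = (n + d) cₙ` and `2 (n + 1) + d - 1 = (n + d) + (n + 1)`, the degeneracies
satisfy `D₀ = c₀` and `Dₙ₊₁ = cₙ₊₁ + cₙ`, so passing from the `cₙ` to the `Dₙ` multiplies the
generating function by `1 + u`.
-/

theorem succ_nsmul_multichoose_succ {R : Type*} [Semiring R] [BinomialRing R] (r : R) (n : ℕ) :
    (n + 1) • Ring.multichoose r (n + 1) = Ring.multichoose r n * (r + n) := by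
  have : IsAddTorsionFree R := BinomialRing.toIsAddTorsionFree
  apply nsmul_right_injective n.factorial_ne_zero
  calc n.factorial • (n + 1) • Ring.multichoose r (n + 1)
      = (n + 1).factorial • Ring.multichoose r (n + 1) := by
        rw [smul_smul, mul_comm, Nat.factorial_succ]
    _ = (ascPochhammer ℕ n).smeval r * (r + n) := by
        rw [Ring.factorial_nsmul_multichoose_eq_ascPochhammer, ascPochhammer_succ_right,
          Polynomial.smeval_mul, Polynomial.smeval_add, Polynomial.smeval_X, pow_one,
          Polynomial.smeval_natCast, pow_zero, nsmul_one]
    _ = n.factorial • (Ring.multichoose r n * (r + n)) := by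
        rw [← Ring.factorial_nsmul_multichoose_eq_ascPochhammer, smul_mul_assoc]

theorem multichoose_succ_eq_mul_div {K : Type*} [DivisionSemiring K] [CharZero K] (r : K) (n : ℕ) :
    Ring.multichoose r (n + 1) = Ring.multichoose r n * (r + n) / (n + 1) := by
  rw [eq_div_iff (Nat.cast_add_one_ne_zero n), ← succ_nsmul_multichoose_succ, ← Nat.cast_succ,
    nsmul_eq_mul, Nat.cast_comm]

theorem multichoose_eq_Gamma_div {x : ℝ} (hx : ∀ m : ℕ, x ≠ -m) (n : ℕ) :
    Ring.multichoose x n = Gamma (n + x) / (Gamma (n + 1) * Gamma x) := by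
  induction n with
  | zero => simp [Gamma_ne_zero hx]
  | succ n ih =>
    have hxn : (n : ℝ) + x ≠ 0 := fun h => hx n (eq_neg_of_add_eq_zero_right h)
    have hn : (n : ℝ) + 1 ≠ 0 := n.cast_add_one_ne_zero
    rw [multichoose_succ_eq_mul_div, ih, Nat.cast_succ, add_right_comm, Gamma_add_one hxn,
      Gamma_add_one hn]
    field

theorem hasSum_multichoose_mul_pow (a : ℝ) {u : ℝ} (hu : |u| < 1) :
    HasSum (fun n : ℕ => Ring.multichoose a n * u ^ n) ((1 - u) ^ (-a)) := by
  have hu_mem : u ∈ Metric.eball (0 : ℝ) 1 := by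
    simpa [Metric.mem_eball, edist_dist, Real.dist_eq] using hu
  rw [rpow_neg (sub_nonneg.2 (lt_of_abs_lt hu).le)]
  simpa [FormalMultilinearSeries.ofScalars_apply_eq, Ring.multichoose_eq, mul_comm] using
    (one_div_one_sub_rpow_hasFPowerSeriesOnBall_zero a).hasSum hu_mem

theorem sphereDegeneracy_zero {d : ℝ} (hd : Gamma d ≠ 0) (hd1 : d ≠ 1) :
    sphereDegeneracy d 0 = 1 := by
  have hGamma : Gamma d = (d - 1) * Gamma (d - 1) := by
    simpa using Gamma_add_one (sub_ne_zero.2 hd1)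
  simp [sphereDegeneracy, mul_comm (Gamma (d - 1)), ← hGamma, hd]

theorem sphereDegeneracy_succ {d : ℝ} (hd : ∀ m : ℕ, d ≠ -m) (n : ℕ) :
    sphereDegeneracy d (n + 1) = Ring.multichoose d (n + 1) + Ring.multichoose d n := by
  have hn : (n : ℝ) + 1 ≠ 0 := n.cast_add_one_ne_zero
  calc sphereDegeneracy d (n + 1)
      = Gamma (n + d) * ((d + n) + (n + 1)) / ((n + 1) * Gamma (n + 1) * Gamma d) := by
        rw [sphereDegeneracy, Nat.cast_succ, Gamma_add_one hn]
        ring_nf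
    _ = Ring.multichoose d n * (d + n) / (n + 1) + Ring.multichoose d n := by
        rw [multichoose_eq_Gamma_div hd]
        field
    _ = Ring.multichoose d (n + 1) + Ring.multichoose d n := by
        rw [multichoose_succ_eq_mul_div]

theorem hasSum_mul_pow_of_succ_eq_add {R : Type*} [Ring R] [TopologicalSpace R]
    [IsTopologicalRing R] {a c : ℕ → R} {u s : R} (h_zero : a 0 = c 0)
    (h_succ : ∀ n, a (n + 1) = c (n + 1) + c n) (hc : HasSum (fun n => c n * u ^ n) s) :
    HasSum (fun n => a n * u ^ n) (s * (1 + u)) := by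
  have hc_tail : HasSum (fun n => c (n + 1) * u ^ (n + 1)) (s - c 0) := by
    simpa using (hasSum_nat_add_iff' 1).2 hc
  have ha_tail : HasSum (fun n => a (n + 1) * u ^ (n + 1)) (s * (1 + u) - a 0) := by
    convert hc_tail.add (hc.mul_right u) using 1
    · ext n
      rw [h_succ, add_mul, mul_assoc, ← pow_succ]
    · rw [h_zero, mul_one_add, sub_add_eq_add_sub]
  exact (hasSum_nat_add_iff' 1).1 (by simpa using ha_tail)

theorem generating_function_of_multiplicities (d : ℝ)
    (hdint : ∀ m : ℤ, m ≤ 1 → d ≠ (m : ℝ)) (u : ℝ) (hu : |u| < 1) :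
    Summable (fun n : ℕ => |sphereDegeneracy d n * u ^ n|) ∧
    ∑' n : ℕ, sphereDegeneracy d n * u ^ n = (1 + u) * (1 - u) ^ (-d) := by
  have hd : ∀ m : ℕ, d ≠ -m := fun m => by exact_mod_cast hdint (-m) (by lia)
  have hd1 : d ≠ 1 := by exact_mod_cast hdint 1 le_rfl
  have h_zero : sphereDegeneracy d 0 = Ring.multichoose d 0 := by
    rw [sphereDegeneracy_zero (Gamma_ne_zero hd) hd1, Ring.multichoose_zero_right]
  have h_sum : HasSum (fun n => sphereDegeneracy d n * u ^ n) ((1 - u) ^ (-d) * (1 + u)) :=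
    hasSum_mul_pow_of_succ_eq_add h_zero (sphereDegeneracy_succ hd)
      (hasSum_multichoose_mul_pow d hu)
  exact ⟨h_sum.summable.abs, by rw [h_sum.tsum_eq, mul_comm]⟩
end

section
/- Let d and ζ be real numbers with d < 0 and d/2 + ζ > 0. Then the function u ↦ u^{d/2 + ζ − 1}·((1−u)^{−d−1}(1+u) − 1) is Lebesgue integrable on (0,1) and ∫₀¹ u^{d/2 + ζ − 1}((1−u)^{−d−1}(1+u) − 1) du = 2ζ·Γ(d/2 + ζ)·Γ(−d)/Γ(ζ − d/2 + 1) − 1/(ζ + d/2). -/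
open Real MeasureTheory

/-!
With `a = d / 2 + ζ` and `b = -d`, expanding `1 + u` writes the integral as
`B(a, b) + B(a + 1, b) - 1 / a`. The recurrence `B(a + 1, b) = a / (a + b) * B(a, b)` merges the
two beta values into one Gamma quotient with coefficient `2 * a + b = 2 * ζ`.
-/

open ProbabilityTheory Set

section BetaIntegral

variable {a b : ℝ}

lemma beta_add_one_left (ha : a ≠ 0) (hab : a + b ≠ 0) :
    beta (a + 1) b = a / (a + b) * beta a b := by
  simp only [beta]
  rw [add_right_comm, Gamma_add_one ha, Gamma_add_one hab, mul_assoc, mul_div_mul_comm]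

lemma beta_add_beta_add_one_left (ha : a ≠ 0) (hab : a + b ≠ 0) :
    beta a b + beta (a + 1) b = (2 * a + b) * Gamma a * Gamma b / Gamma (a + b + 1) := by
  rw [beta_add_one_left ha hab, beta, Gamma_add_one hab]
  field_simp
  ring

lemma setIntegral_rpow_mul_one_sub_rpow (ha : 0 < a) (hb : 0 < b) :
    ∫ u in Ioo (0 : ℝ) 1, u ^ (a - 1) * (1 - u) ^ (b - 1) = beta a b := by
  have kernel_ofReal : EqOn (fun u : ℝ ↦ (u : ℂ) ^ ((a : ℂ) - 1) * (1 - (u : ℂ)) ^ ((b : ℂ) - 1))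
      (fun u ↦ ((u ^ (a - 1) * (1 - u) ^ (b - 1) : ℝ) : ℂ)) (Ioo 0 1) := fun u hu ↦ by
    push_cast [Complex.ofReal_cpow hu.1.le, Complex.ofReal_cpow (sub_nonneg.2 hu.2.le)]
    rfl
  rw [beta_eq_betaIntegralReal a b ha hb, Complex.betaIntegral,
    intervalIntegral.integral_of_le zero_le_one, integral_Ioc_eq_integral_Ioo,
    setIntegral_congr_fun measurableSet_Ioo kernel_ofReal, integral_complex_ofReal,
    Complex.ofReal_re]

lemma integrableOn_rpow_mul_one_sub_rpow (ha : 0 < a) (hb : 0 < b) :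
    IntegrableOn (fun u : ℝ ↦ u ^ (a - 1) * (1 - u) ^ (b - 1)) (Ioo 0 1) :=
  -- The Bochner integral of a non-integrable function is `0`, whereas `beta a b` is positive.
  .of_integral_ne_zero <|
    (setIntegral_rpow_mul_one_sub_rpow ha hb).trans_ne (beta_pos ha hb).ne'

lemma integrableOn_Ioo_rpow_sub_one {t : ℝ} (ha : 0 < a) (ht : 0 < t) :
    IntegrableOn (fun u : ℝ ↦ u ^ (a - 1)) (Ioo 0 t) :=
  (intervalIntegral.integrableOn_Ioo_rpow_iff ht).2 (by linarith)

lemma setIntegral_Ioo_rpow_sub_one {t : ℝ} (ha : 0 < a) (ht : 0 ≤ t) :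
    ∫ u in Ioo 0 t, u ^ (a - 1) = t ^ a / a := by
  rw [← integral_Ioc_eq_integral_Ioo, ← intervalIntegral.integral_of_le ht,
    integral_rpow (.inl (by linarith)), sub_add_cancel, zero_rpow ha.ne', sub_zero]

lemma rpow_mul_one_sub_rpow_mul_one_add_sub_one {u : ℝ} (hu : 0 < u) :
    u ^ (a - 1) * ((1 - u) ^ (b - 1) * (1 + u) - 1) =
      u ^ (a - 1) * (1 - u) ^ (b - 1) + u ^ (a + 1 - 1) * (1 - u) ^ (b - 1) - u ^ (a - 1) := by
  rw [add_sub_right_comm a, rpow_add_one hu.ne']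
  ring

lemma integrableOn_rpow_mul_one_sub_rpow_mul_one_add_sub_one (ha : 0 < a) (hb : 0 < b) :
    IntegrableOn (fun u : ℝ ↦ u ^ (a - 1) * ((1 - u) ^ (b - 1) * (1 + u) - 1)) (Ioo 0 1) :=
  (((integrableOn_rpow_mul_one_sub_rpow ha hb).add
    (integrableOn_rpow_mul_one_sub_rpow (by positivity) hb)).sub
      (integrableOn_Ioo_rpow_sub_one ha one_pos)).congr_fun
    (fun _ hu ↦ (rpow_mul_one_sub_rpow_mul_one_add_sub_one hu.1).symm) measurableSet_Ioo

lemma setIntegral_rpow_mul_one_sub_rpow_mul_one_add_sub_one (ha : 0 < a) (hb : 0 < b) :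
    ∫ u in Ioo (0 : ℝ) 1, u ^ (a - 1) * ((1 - u) ^ (b - 1) * (1 + u) - 1) =
      (2 * a + b) * Gamma a * Gamma b / Gamma (a + b + 1) - 1 / a := by
  have ha' : 0 < a + 1 := by positivity
  have h_left := integrableOn_rpow_mul_one_sub_rpow ha hb
  have h_right := integrableOn_rpow_mul_one_sub_rpow ha' hb
  calc
    _ = ∫ u in Ioo (0 : ℝ) 1, (u ^ (a - 1) * (1 - u) ^ (b - 1) +
          u ^ (a + 1 - 1) * (1 - u) ^ (b - 1) - u ^ (a - 1)) :=
      setIntegral_congr_fun measurableSet_Ioo fun _ hu ↦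
        rpow_mul_one_sub_rpow_mul_one_add_sub_one hu.1
    _ = beta a b + beta (a + 1) b - 1 / a := by
      rw [integral_sub (Integrable.fun_add h_left h_right)
          (integrableOn_Ioo_rpow_sub_one ha one_pos), integral_add h_left h_right,
        setIntegral_rpow_mul_one_sub_rpow ha hb, setIntegral_rpow_mul_one_sub_rpow ha' hb,
        setIntegral_Ioo_rpow_sub_one ha zero_le_one, one_rpow]
    _ = _ := by rw [beta_add_beta_add_one_left ha.ne' (by positivity)]

end BetaIntegral

theorem subtracted_beta_integral (d ζ : ℝ) (hd : d < 0) (hdζ : 0 < d / 2 + ζ) :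
    MeasureTheory.IntegrableOn
      (fun u : ℝ => u ^ (d / 2 + ζ - 1) * ((1 - u) ^ (-d - 1) * (1 + u) - 1))
      (Set.Ioo 0 1) ∧
    ∫ u in Set.Ioo (0 : ℝ) 1, u ^ (d / 2 + ζ - 1) * ((1 - u) ^ (-d - 1) * (1 + u) - 1)
      = 2 * ζ * Real.Gamma (d / 2 + ζ) * Real.Gamma (-d) / Real.Gamma (ζ - d / 2 + 1)
        - 1 / (ζ + d / 2) := by
  have hd' : 0 < -d := neg_pos.2 hd
  refine ⟨integrableOn_rpow_mul_one_sub_rpow_mul_one_add_sub_one hdζ hd', ?_⟩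
  have h_two_mul_add : 2 * (d / 2 + ζ) + -d = 2 * ζ := by ring
  have h_add : d / 2 + ζ + -d = ζ - d / 2 := by ring
  rw [setIntegral_rpow_mul_one_sub_rpow_mul_one_add_sub_one hdζ hd', h_two_mul_add, h_add,
    add_comm ζ (d / 2)]
end
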